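/- Let Ω ⊆ ℝ³ be a bounded open set, x ∈ Ω, and σ : [0,1] → closure(Ω) a needle with tip at x, that is, a piecewise linear injective curve with σ(0) ∈ ∂Ω, σ(1) = x, and σ(t) ∈ Ω for all 0 < t < 1. Fix j ∈ {1,2,3} and set Φ(z) = ∂G/∂z_j (z − x). Let (v_n) be a sequence of functions that are harmonic on Ω (twice continuously differentiable with vanishing Laplacian on Ω) and satisfy ∫_K (v_n − Φ)² dz → 0 for every compact set K ⊆ Ω ∖ σ([0,1]). Then for every point z₀ ∈ σ((0,1]) and every open ball B centered at z₀, ∫_{B ∩ Ω} v_n² dz → +∞ as n → ∞. (Proposition 3.1(b), stated with the defining properties of a needle sequence as hypotheses.) -/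

import Mathlib

open MeasureTheory Filter
open scoped ENNReal Topology

noncomputable section

/-- A curve `σ : ℝ → ℝ³` is piecewise linear (on `[0,1]`): there is a partition
`0 = t₀ < t₁ < ⋯ < t_m = 1` such that `σ` is affine on each subinterval. -/
def PiecewiseLinear (σ : ℝ → EuclideanSpace ℝ (Fin 3)) : Prop :=
  ∃ (m : ℕ) (t : Fin (m + 1) → ℝ), StrictMono t ∧ t 0 = 0 ∧ t (Fin.last m) = 1 ∧
    ∀ i : Fin m, ∀ u ∈ Set.Icc (t i.castSucc) (t i.succ),
      σ u = σ (t i.castSucc) +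
        ((u - t i.castSucc) / (t i.succ - t i.castSucc)) •
          (σ (t i.succ) - σ (t i.castSucc))

/-- A needle with tip at `x ∈ Ω`: a piecewise linear injective curve
`σ : [0,1] → closure Ω` with `σ(0) ∈ ∂Ω`, `σ(1) = x` and `σ(t) ∈ Ω` for `0 < t < 1`. -/
def IsNeedle (Ω : Set (EuclideanSpace ℝ (Fin 3))) (x : EuclideanSpace ℝ (Fin 3))
    (σ : ℝ → EuclideanSpace ℝ (Fin 3)) : Prop :=
  PiecewiseLinear σ ∧ Set.InjOn σ (Set.Icc 0 1) ∧
    (∀ t ∈ Set.Icc (0 : ℝ) 1, σ t ∈ closure Ω) ∧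
    σ 0 ∈ frontier Ω ∧ σ 1 = x ∧ ∀ t ∈ Set.Ioo (0 : ℝ) 1, σ t ∈ Ω

/-- A function is harmonic on an open set `Ω ⊆ ℝ³` if it is twice continuously
differentiable there and its Laplacian vanishes on `Ω`. -/
def HarmonicOnSet (v : EuclideanSpace ℝ (Fin 3) → ℝ)
    (Ω : Set (EuclideanSpace ℝ (Fin 3))) : Prop :=
  ContDiffOn ℝ 2 v Ω ∧ ∀ z ∈ Ω,
    (∑ i : Fin 3,
      fderiv ℝ (fun w => fderiv ℝ v w (EuclideanSpace.single i 1)) z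
        (EuclideanSpace.single i 1)) = 0

/-- The Laplacian, as it appears in the frozen statement. -/
def LapE (u : EuclideanSpace ℝ (Fin 3) → ℝ) (z : EuclideanSpace ℝ (Fin 3)) : ℝ :=
  ∑ i : Fin 3, fderiv ℝ (fun w => fderiv ℝ u w (EuclideanSpace.single i 1)) z
        (EuclideanSpace.single i 1)

lemma mul_continuous_of_supp {V : Set (EuclideanSpace ℝ (Fin 3))} (hV : IsOpen V)
    {a b : EuclideanSpace ℝ (Fin 3) → ℝ} (ha : ContinuousOn a V) (hb : Continuous b)
    (hs : tsupport b ⊆ V) : Continuous (fun z => a z * b z) := by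
  rw [continuous_iff_continuousAt]
  intro z
  by_cases hz : z ∈ tsupport b
  · exact (ha.continuousAt (hV.mem_nhds (hs hz))).mul hb.continuousAt
  · have h0 : b =ᶠ[𝓝 z] 0 := notMem_tsupport_iff_eventuallyEq.mp hz
    have : (fun z => a z * b z) =ᶠ[𝓝 z] fun _ => 0 := by
      filter_upwards [h0] with w hw
      simp [hw]
    exact (continuousAt_const).congr this.symm

lemma mul_integrable_of_supp {V : Set (EuclideanSpace ℝ (Fin 3))} (hV : IsOpen V)
    {a b : EuclideanSpace ℝ (Fin 3) → ℝ} (ha : ContinuousOn a V) (hb : Continuous b)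
    (hc : HasCompactSupport b) (hs : tsupport b ⊆ V) : Integrable (fun z => a z * b z) :=
  (mul_continuous_of_supp hV ha hb hs).integrable_of_hasCompactSupport (hc.mul_left)

lemma contDiff_pd {ψ : EuclideanSpace ℝ (Fin 3) → ℝ} {n : ℕ∞} {m : ℕ∞} (h : ContDiff ℝ n ψ)
    (hm : m + 1 ≤ n) (e : EuclideanSpace ℝ (Fin 3)) :
    ContDiff ℝ m (fun w => fderiv ℝ ψ w e) :=
  (h.fderiv_right (by exact_mod_cast hm)).clm_apply contDiff_const

lemma tsupport_pd (ψ : EuclideanSpace ℝ (Fin 3) → ℝ) (e : EuclideanSpace ℝ (Fin 3)) :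
    tsupport (fun w => fderiv ℝ ψ w e) ⊆ tsupport ψ := by
  refine (closure_mono ?_).trans (tsupport_fderiv_subset ℝ (f := ψ))
  intro w hw
  simp only [Function.mem_support] at hw ⊢
  intro h
  exact hw (by simp [h])

lemma integral_mul_LapE {V : Set (EuclideanSpace ℝ (Fin 3))} (hV : IsOpen V)
    {u ψ : EuclideanSpace ℝ (Fin 3) → ℝ} (hu : ContDiffOn ℝ 2 u V)
    (hL : ∀ z ∈ V, LapE u z = 0) (hψ : ContDiff ℝ 2 ψ) (hc : HasCompactSupport ψ)
    (hs : tsupport ψ ⊆ V) : ∫ z, u z * LapE ψ z = 0 := by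
  have hd1 : ∀ e : EuclideanSpace ℝ (Fin 3), ContDiffOn ℝ 1 (fun w => fderiv ℝ u w e) V :=
    fun e => (hu.fderiv_of_isOpen hV (m := 1) (by norm_num)).clm_apply contDiffOn_const
  have hd2 : ∀ e : EuclideanSpace ℝ (Fin 3),
      ContinuousOn (fun z => fderiv ℝ (fun w => fderiv ℝ u w e) z e) V :=
    fun e => ((hd1 e).continuousOn_fderiv_of_isOpen hV (by norm_num)).clm_apply continuousOn_const
  have hp1 : ∀ e : EuclideanSpace ℝ (Fin 3), ContDiff ℝ 1 (fun w => fderiv ℝ ψ w e) :=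
    fun e => contDiff_pd (n := 2) (m := 1) hψ (by norm_num) e
  have hp2 : ∀ e : EuclideanSpace ℝ (Fin 3),
      Continuous (fun z => fderiv ℝ (fun w => fderiv ℝ ψ w e) z e) :=
    fun e => ((hp1 e).continuous_fderiv (by norm_num)).clm_apply continuous_const
  have hc1 : ∀ e : EuclideanSpace ℝ (Fin 3), HasCompactSupport (fun w => fderiv ℝ ψ w e) :=
    fun e => hc.of_isClosed_subset (isClosed_tsupport _) (tsupport_pd ψ e)
  have hc2 : ∀ e : EuclideanSpace ℝ (Fin 3),
      HasCompactSupport (fun z => fderiv ℝ (fun w => fderiv ℝ ψ w e) z e) :=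
    fun e => (hc1 e).of_isClosed_subset (isClosed_tsupport _) (tsupport_pd _ e)
  have hs1 : ∀ e : EuclideanSpace ℝ (Fin 3), tsupport (fun w => fderiv ℝ ψ w e) ⊆ V :=
    fun e => (tsupport_pd ψ e).trans hs
  have hs2 : ∀ e : EuclideanSpace ℝ (Fin 3),
      tsupport (fun z => fderiv ℝ (fun w => fderiv ℝ ψ w e) z e) ⊆ V :=
    fun e => (tsupport_pd _ e).trans (hs1 e)
  have key : ∀ e : EuclideanSpace ℝ (Fin 3),
      ∫ z, u z * fderiv ℝ (fun w => fderiv ℝ ψ w e) z e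
        = ∫ z, fderiv ℝ (fun w => fderiv ℝ u w e) z e * ψ z := by
    intro e
    have e1 := integral_mul_fderiv_eq_neg_fderiv_mul_of_integrable (μ := volume) (f := u)
      (g := fun w => fderiv ℝ ψ w e) (v := e)
      (mul_integrable_of_supp hV (hd1 e).continuousOn (hp1 e).continuous (hc1 e) (hs1 e))
      (mul_integrable_of_supp hV hu.continuousOn (hp2 e) (hc2 e) (hs2 e))
      (mul_integrable_of_supp hV hu.continuousOn (hp1 e).continuous (hc1 e) (hs1 e))
      (fun z hz => (hu.contDiffAt (hV.mem_nhds (hs1 e hz))).differentiableAt (by norm_num))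
      (fun z hz => (hp1 e).differentiable (by norm_num) z)
    have e2 := integral_mul_fderiv_eq_neg_fderiv_mul_of_integrable (μ := volume)
      (f := fun w => fderiv ℝ u w e)
      (g := ψ) (v := e)
      (mul_integrable_of_supp hV (hd2 e) hψ.continuous hc hs)
      (mul_integrable_of_supp hV (hd1 e).continuousOn (hp1 e).continuous (hc1 e) (hs1 e))
      (mul_integrable_of_supp hV (hd1 e).continuousOn hψ.continuous hc hs)
      (fun z hz => ((hd1 e).contDiffAt (hV.mem_nhds (hs hz))).differentiableAt (by norm_num))
      (fun z hz => hψ.differentiable (by norm_num) z)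
    rw [e1, e2, neg_neg]
  have : ∫ z, u z * LapE ψ z = ∫ z, LapE u z * ψ z := by
    simp only [LapE, Finset.mul_sum, Finset.sum_mul]
    rw [integral_finsetSum, integral_finsetSum]
    · exact Finset.sum_congr rfl fun i _ => key _
    · exact fun i _ => mul_integrable_of_supp hV (hd2 _) hψ.continuous hc hs
    · exact fun i _ => mul_integrable_of_supp hV hu.continuousOn (hp2 _) (hc2 _) (hs2 _)
  rw [this]
  have h0 : (fun z => LapE u z * ψ z) = fun _ => 0 := by
    funext z
    by_cases hz : z ∈ tsupport ψ
    · rw [hL z (hs hz), zero_mul]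
    · rw [image_eq_zero_of_notMem_tsupport hz, mul_zero]
  rw [h0]; simp

lemma LapE_congr {u w : EuclideanSpace ℝ (Fin 3) → ℝ} {z : EuclideanSpace ℝ (Fin 3)}
    (h : u =ᶠ[𝓝 z] w) : LapE u z = LapE w z := by
  unfold LapE
  refine Finset.sum_congr rfl fun i _ => ?_
  have : (fun y => fderiv ℝ u y (EuclideanSpace.single i 1)) =ᶠ[𝓝 z]
      (fun y => fderiv ℝ w y (EuclideanSpace.single i 1)) := by
    filter_upwards [h.fderiv (𝕜 := ℝ)] with y hy
    rw [hy]
  rw [this.fderiv_eq]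

lemma LapE_continuous {ψ : EuclideanSpace ℝ (Fin 3) → ℝ} (hψ : ContDiff ℝ 2 ψ) :
    Continuous (LapE ψ) := by
  unfold LapE
  refine continuous_finsetSum _ fun i _ => ?_
  exact ((contDiff_pd (n := 2) (m := 1) hψ (by norm_num) _).continuous_fderiv
    (by norm_num)).clm_apply continuous_const

lemma tsupport_LapE (ψ : EuclideanSpace ℝ (Fin 3) → ℝ) : tsupport (LapE ψ) ⊆ tsupport ψ := by
  refine closure_minimal ?_ (isClosed_tsupport _)
  intro z hz
  by_contra h
  apply hz
  rw [LapE_congr (notMem_tsupport_iff_eventuallyEq.mp h)]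
  simp [LapE]

lemma LapE_sub {ψ φ : EuclideanSpace ℝ (Fin 3) → ℝ} (hψ : ContDiff ℝ 2 ψ) (hφ : ContDiff ℝ 2 φ)
    (z : EuclideanSpace ℝ (Fin 3)) : LapE (fun y => ψ y - φ y) z = LapE ψ z - LapE φ z := by
  unfold LapE
  rw [← Finset.sum_sub_distrib]
  refine Finset.sum_congr rfl fun i _ => ?_
  have : (fun w => fderiv ℝ (fun y => ψ y - φ y) w (EuclideanSpace.single i 1)) =
      fun w => fderiv ℝ ψ w (EuclideanSpace.single i 1)
        - fderiv ℝ φ w (EuclideanSpace.single i 1) := by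
    funext w
    rw [fderiv_fun_sub (hψ.differentiable (by norm_num) w) (hφ.differentiable (by norm_num) w)]
    rfl
  rw [this, fderiv_fun_sub]
  · rfl
  · exact (contDiff_pd (n := 2) (m := 1) hψ (by norm_num) _).differentiable (by norm_num) z
  · exact (contDiff_pd (n := 2) (m := 1) hφ (by norm_num) _).differentiable (by norm_num) z

lemma hasFDerivAt_radial (x : EuclideanSpace ℝ (Fin 3)) {f : ℝ → ℝ} {d : ℝ}
    (z : EuclideanSpace ℝ (Fin 3)) (hf : HasDerivAt f d (‖z - x‖ ^ 2)) :
    HasFDerivAt (fun y => f (‖y - x‖ ^ 2)) (d • ((2 : ℝ) • innerSL ℝ (z - x))) z := by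
  have h1 : HasFDerivAt (fun y : EuclideanSpace ℝ (Fin 3) => ‖y - x‖ ^ 2)
      ((2 : ℝ) • innerSL ℝ (z - x)) z := by
    have := (((hasFDerivAt_id z).sub_const x)).norm_sq
    rw [← Nat.cast_smul_eq_nsmul ℝ] at this
    simpa using this
  exact hf.comp_hasFDerivAt z h1

lemma hasFDerivAt_coord (x : EuclideanSpace ℝ (Fin 3)) (j : Fin 3)
    (z : EuclideanSpace ℝ (Fin 3)) :
    HasFDerivAt (fun y : EuclideanSpace ℝ (Fin 3) => (y - x) j)
      (EuclideanSpace.proj j : EuclideanSpace ℝ (Fin 3) →L[ℝ] ℝ) z := by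
  exact ((EuclideanSpace.proj j : EuclideanSpace ℝ (Fin 3) →L[ℝ] ℝ).hasFDerivAt).comp z
    ((hasFDerivAt_id z).sub_const x)

lemma LapE_radial (x : EuclideanSpace ℝ (Fin 3)) (j : Fin 3) {f f' : ℝ → ℝ} {f'' : ℝ}
    (z : EuclideanSpace ℝ (Fin 3)) (hf : ∀ᶠ t in 𝓝 (‖z - x‖ ^ 2), HasDerivAt f (f' t) t)
    (hf' : HasDerivAt f' f'' (‖z - x‖ ^ 2)) :
    LapE (fun y => (y - x) j * f (‖y - x‖ ^ 2)) z
      = (z - x) j * (4 * ‖z - x‖ ^ 2 * f'' + 10 * f' (‖z - x‖ ^ 2)) := by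
  have hcont : Tendsto (fun y : EuclideanSpace ℝ (Fin 3) => ‖y - x‖ ^ 2) (𝓝 z)
      (𝓝 (‖z - x‖ ^ 2)) := by
    have : Continuous (fun y : EuclideanSpace ℝ (Fin 3) => ‖y - x‖ ^ 2) := by fun_prop
    exact this.tendsto z
  have hev := hcont.eventually hf
  have hterm : ∀ i : Fin 3,
      fderiv ℝ (fun w => fderiv ℝ (fun y => (y - x) j * f (‖y - x‖ ^ 2)) w
        (EuclideanSpace.single i 1)) z (EuclideanSpace.single i 1)
      = (EuclideanSpace.single i (1 : ℝ) : EuclideanSpace ℝ (Fin 3)) j * (4 * (z - x) i * f' (‖z - x‖ ^ 2))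
        + (z - x) j * (2 * f' (‖z - x‖ ^ 2) + 4 * ((z - x) i) ^ 2 * f'') := by
    intro i
    have hfirst : (fun w => fderiv ℝ (fun y => (y - x) j * f (‖y - x‖ ^ 2)) w
        (EuclideanSpace.single i 1)) =ᶠ[𝓝 z] fun w =>
          (EuclideanSpace.single i (1 : ℝ) : EuclideanSpace ℝ (Fin 3)) j * f (‖w - x‖ ^ 2)
          + 2 * ((w - x) j * (w - x) i * f' (‖w - x‖ ^ 2)) := by
      filter_upwards [hev] with w hw
      have := ((hasFDerivAt_coord x j w).mul (hasFDerivAt_radial x w hw)).fderiv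
      rw [show (fun y : EuclideanSpace ℝ (Fin 3) => (y - x) j * f (‖y - x‖ ^ 2)) =
        (fun y => (y - x) j) * (fun y => f (‖y - x‖ ^ 2)) from rfl, this]
      simp [EuclideanSpace.inner_single_right]
      ring
    rw [hfirst.fderiv_eq]
    have h2 := (((hasFDerivAt_radial x z hf.self_of_nhds).const_mul
      ((EuclideanSpace.single i (1 : ℝ) : EuclideanSpace ℝ (Fin 3)) j)).add
      (((((hasFDerivAt_coord x j z).mul (hasFDerivAt_coord x i z))).mul
        (hasFDerivAt_radial x z hf')).const_mul 2)).fderiv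
    refine (DFunLike.congr_fun h2 (EuclideanSpace.single i 1)).trans ?_
    by_cases hji : j = i
    · subst hji
      simp [EuclideanSpace.inner_single_right]
      ring
    · simp [EuclideanSpace.inner_single_right, hji]
      ring
  unfold LapE
  rw [Finset.sum_congr rfl fun i _ => hterm i]
  have hn : ‖z - x‖ ^ 2 = ∑ i, ((z - x) i) ^ 2 := by
    rw [EuclideanSpace.norm_sq_eq]; simp
  generalize f' (‖z - x‖ ^ 2) = F
  rw [hn]
  fin_cases j <;> simp [Fin.sum_univ_three] <;> ring

/-- The dipole potential. -/
def dip (x : EuclideanSpace ℝ (Fin 3)) (j : Fin 3) (z : EuclideanSpace ℝ (Fin 3)) : ℝ :=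
  -((z - x) j) / (4 * Real.pi * ‖z - x‖ ^ 3)

lemma dip_contDiffOn (x : EuclideanSpace ℝ (Fin 3)) (j : Fin 3) :
    ContDiffOn ℝ 2 (dip x j) {x}ᶜ := by
  intro z hz
  have hz' : z - x ≠ 0 := sub_ne_zero.mpr hz
  apply ContDiffAt.contDiffWithinAt
  unfold dip
  refine ContDiffAt.div ?_ ?_ ?_
  · have : ContDiff ℝ 2 (fun y : EuclideanSpace ℝ (Fin 3) => (y - x) j) :=
      (EuclideanSpace.proj j : EuclideanSpace ℝ (Fin 3) →L[ℝ] ℝ).contDiff.comp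
        (contDiff_id.sub contDiff_const)
    exact this.neg.contDiffAt
  · refine contDiffAt_const.mul (ContDiffAt.pow ?_ 3)
    exact ContDiffAt.norm ℝ (contDiffAt_id.sub contDiffAt_const) hz'
  · have := norm_pos_iff.mpr hz'
    positivity

lemma dip_eq (x : EuclideanSpace ℝ (Fin 3)) (j : Fin 3) (z : EuclideanSpace ℝ (Fin 3)) :
    dip x j z = (z - x) j * (-(1 / (4 * Real.pi)) * (‖z - x‖ ^ 2) ^ (-(3 / 2) : ℝ)) := by
  have : (‖z - x‖ ^ 2) ^ (-(3 / 2) : ℝ) = (‖z - x‖ ^ 3)⁻¹ := by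
    rw [← Real.rpow_natCast, ← Real.rpow_mul (norm_nonneg _), ← Real.rpow_natCast,
      ← Real.rpow_neg (norm_nonneg _)]
    norm_num
  rw [this, dip]
  field_simp

lemma dip_harmonic (x : EuclideanSpace ℝ (Fin 3)) (j : Fin 3) (z : EuclideanSpace ℝ (Fin 3))
    (hz : z ∈ ({x}ᶜ : Set _)) : LapE (dip x j) z = 0 := by
  have hz' : z - x ≠ 0 := sub_ne_zero.mpr hz
  have hpos : 0 < ‖z - x‖ ^ 2 := by
    have := norm_pos_iff.mpr hz'
    positivity
  rw [show dip x j = fun y => (y - x) j *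
      (fun t : ℝ => -(1 / (4 * Real.pi)) * t ^ (-(3 / 2) : ℝ)) (‖y - x‖ ^ 2) from
      funext fun y => dip_eq x j y]
  have h1 : ∀ t : ℝ, 0 < t → HasDerivAt (fun t : ℝ => -(1 / (4 * Real.pi)) * t ^ (-(3 / 2) : ℝ))
      ((fun t : ℝ => (3 / (8 * Real.pi)) * t ^ (-(5 / 2) : ℝ)) t) t := by
    intro t ht
    have := (Real.hasDerivAt_rpow_const (p := (-(3 / 2) : ℝ)) (Or.inl ht.ne')).const_mul
      (-(1 / (4 * Real.pi)))
    rw [show (-(3 / 2) - 1 : ℝ) = -(5 / 2) by norm_num] at this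
    refine this.congr_deriv ?_
    have hpi := Real.pi_ne_zero
    field_simp
    ring
  have h2 : ∀ t : ℝ, 0 < t → HasDerivAt (fun t : ℝ => (3 / (8 * Real.pi)) * t ^ (-(5 / 2) : ℝ))
      (-(15 / (16 * Real.pi)) * t ^ (-(7 / 2) : ℝ)) t := by
    intro t ht
    have := (Real.hasDerivAt_rpow_const (p := (-(5 / 2) : ℝ)) (Or.inl ht.ne')).const_mul
      (3 / (8 * Real.pi))
    rw [show (-(5 / 2) - 1 : ℝ) = -(7 / 2) by norm_num] at this
    refine this.congr_deriv ?_
    have hpi := Real.pi_ne_zero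
    field_simp
    ring
  have hev : ∀ᶠ t in 𝓝 (‖z - x‖ ^ 2),
      HasDerivAt (fun t : ℝ => -(1 / (4 * Real.pi)) * t ^ (-(3 / 2) : ℝ))
        ((fun t : ℝ => (3 / (8 * Real.pi)) * t ^ (-(5 / 2) : ℝ)) t) t := by
    filter_upwards [lt_mem_nhds hpos] with t ht
    exact h1 t ht
  refine (LapE_radial x j z hev (h2 _ hpos)).trans ?_
  generalize ‖z - x‖ ^ 2 = t at hpos
  have : t ^ (-(5 / 2) : ℝ) = t * t ^ (-(7 / 2) : ℝ) := by
    rw [show (-(5 / 2) : ℝ) = 1 + -(7 / 2) by norm_num, Real.rpow_add hpos, Real.rpow_one]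
  simp only [this]
  have hpi := Real.pi_ne_zero
  field_simp
  ring

/-- radial profile of the cutoff -/
def cutf (t : ℝ) : ℝ := Real.smoothTransition (2 - t)

def cutk (t : ℝ) : ℝ := 4 * t * deriv (deriv cutf) t + 10 * deriv cutf t

lemma cutf_contDiff (n : ℕ∞) : ContDiff ℝ n cutf :=
  Real.smoothTransition.contDiff.comp (contDiff_const.sub contDiff_id)

lemma cutf_deriv (t : ℝ) : HasDerivAt cutf (deriv cutf t) t :=
  ((cutf_contDiff 1).differentiable (by norm_num) t).hasDerivAt

lemma cutf_deriv_contDiff : ContDiff ℝ 1 (deriv cutf) :=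
  (contDiff_succ_iff_deriv.mp (show ContDiff ℝ (1 + 1) cutf from (cutf_contDiff 2).of_le (by norm_num))).2.2

lemma cutf_deriv2 (t : ℝ) : HasDerivAt (deriv cutf) (deriv (deriv cutf) t) t :=
  (cutf_deriv_contDiff.differentiable (by norm_num) t).hasDerivAt

lemma cutk_continuous : Continuous cutk := by
  have h1 : Continuous (deriv cutf) := cutf_deriv_contDiff.continuous
  have h2 : Continuous (deriv (deriv cutf)) := cutf_deriv_contDiff.continuous_deriv (by norm_num)
  unfold cutk
  fun_prop

lemma cutk_zero_of {t c : ℝ} (h : cutf =ᶠ[𝓝 t] fun _ => c) : cutk t = 0 := by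
  have h1 : deriv cutf =ᶠ[𝓝 t] fun _ => 0 := by
    have := h.deriv
    simpa using this
  have h2 : deriv (deriv cutf) t = 0 := by
    rw [h1.deriv_eq]; simp
  simp [cutk, h2, h1.self_of_nhds]

lemma cutf_lt {t : ℝ} (ht : t ≤ 1) : cutf t = 1 :=
  Real.smoothTransition.one_of_one_le (by linarith)

lemma cutf_gt {t : ℝ} (ht : 2 ≤ t) : cutf t = 0 :=
  Real.smoothTransition.zero_of_nonpos (by linarith)

lemma cutk_lt {t : ℝ} (ht : t < 1) : cutk t = 0 := by
  apply cutk_zero_of (c := 1)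
  filter_upwards [gt_mem_nhds ht] with s hs
  exact cutf_lt (le_of_lt hs)

lemma cutk_gt {t : ℝ} (ht : 2 < t) : cutk t = 0 := by
  apply cutk_zero_of (c := 0)
  filter_upwards [lt_mem_nhds ht] with s hs
  exact cutf_gt (le_of_lt hs)

/-- radial test function -/
def cutψ (x : EuclideanSpace ℝ (Fin 3)) (j : Fin 3) (z : EuclideanSpace ℝ (Fin 3)) : ℝ :=
  (z - x) j * cutf (‖z - x‖ ^ 2)

lemma coord_contDiff (x : EuclideanSpace ℝ (Fin 3)) (j : Fin 3) {n : ℕ∞} :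
    ContDiff ℝ n (fun y : EuclideanSpace ℝ (Fin 3) => (y - x) j) :=
  (EuclideanSpace.proj j : EuclideanSpace ℝ (Fin 3) →L[ℝ] ℝ).contDiff.comp
        (contDiff_id.sub contDiff_const)

lemma cutψ_contDiff (x : EuclideanSpace ℝ (Fin 3)) (j : Fin 3) : ContDiff ℝ 2 (cutψ x j) := by
  unfold cutψ
  refine (coord_contDiff x j (n := 2)).mul ?_
  exact (cutf_contDiff 2).comp ((contDiff_id.sub contDiff_const).norm_sq ℝ)

lemma LapE_cutψ (x : EuclideanSpace ℝ (Fin 3)) (j : Fin 3) (z : EuclideanSpace ℝ (Fin 3)) :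
    LapE (cutψ x j) z = (z - x) j * cutk (‖z - x‖ ^ 2) :=
  LapE_radial x j z (Eventually.of_forall cutf_deriv) (cutf_deriv2 _)

lemma radial_1d : ∫ r in Set.Ioi (0 : ℝ), r * cutk (r ^ 2) = -3 := by
  have hd : ∀ r ∈ Set.Ici (0 : ℝ), HasDerivAt
      (fun r : ℝ => 2 * r ^ 2 * deriv cutf (r ^ 2) + 3 * cutf (r ^ 2)) (r * cutk (r ^ 2)) r := by
    intro r _
    have hsq : HasDerivAt (fun r : ℝ => r ^ 2) (2 * r) r := by
      simpa using hasDerivAt_pow 2 r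
    have h1 := (cutf_deriv (r ^ 2)).comp r hsq
    have h2 := (cutf_deriv2 (r ^ 2)).comp r hsq
    have h3 := (((hsq.const_mul 2).mul h2)).add (h1.const_mul 3)
    refine h3.congr_deriv ?_
    simp only [cutk, Function.comp]
    ring
  have hc : Continuous (fun r : ℝ => r * cutk (r ^ 2)) := by
    have := cutk_continuous
    fun_prop
  have hcs : HasCompactSupport (fun r : ℝ => r * cutk (r ^ 2)) := by
    apply HasCompactSupport.intro (isCompact_Icc (a := (-2 : ℝ)) (b := 2))
    intro r hr
    rw [cutk_gt, mul_zero]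
    by_contra h
    apply hr
    constructor <;> nlinarith
  have h := integral_Ioi_of_hasDerivAt_of_tendsto' hd
    (hc.integrable_of_hasCompactSupport hcs).integrableOn (m := 0) (by
      apply tendsto_const_nhds.congr'
      filter_upwards [eventually_gt_atTop 2] with r hr
      have h1 : (2 : ℝ) < r ^ 2 := by nlinarith
      have h2 : cutf =ᶠ[𝓝 (r ^ 2)] fun _ => (0 : ℝ) := by
        filter_upwards [lt_mem_nhds h1] with s hs
        exact cutf_gt (le_of_lt hs)
      rw [cutf_gt h1.le, h2.deriv_eq]
      simp)
  rw [h]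
  simp [cutf_lt (show (0 : ℝ) ≤ 1 by norm_num)]

lemma radial_integrable (i : Fin 3) : Integrable (fun z : EuclideanSpace ℝ (Fin 3) =>
    ((z i) ^ 2 * (-1 / (4 * Real.pi * ‖z‖ ^ 3))) * cutk (‖z‖ ^ 2)) := by
  have hsub : tsupport (fun z : EuclideanSpace ℝ (Fin 3) => cutk (‖z‖ ^ 2)) ⊆
      {z | 1 ≤ ‖z‖ ^ 2 ∧ ‖z‖ ^ 2 ≤ 2} := by
    apply closure_minimal
    · intro z hz
      constructor
      · by_contra h
        exact hz (cutk_lt (not_le.mp h))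
      · by_contra h
        exact hz (cutk_gt (not_le.mp h))
    · have hn : Continuous (fun z : EuclideanSpace ℝ (Fin 3) => ‖z‖ ^ 2) := by fun_prop
      exact (isClosed_le continuous_const hn).inter (isClosed_le hn continuous_const)
  refine mul_integrable_of_supp (V := {0}ᶜ) isOpen_compl_singleton ?_ ?_ ?_ ?_
  · refine ContinuousOn.mul (by fun_prop) ?_
    refine ContinuousOn.div (by fun_prop) (by fun_prop) ?_
    intro z hz
    have : 0 < ‖z‖ := norm_pos_iff.mpr hz
    positivity
  · have := cutk_continuous
    fun_prop
  · refine (isCompact_closedBall (0 : EuclideanSpace ℝ (Fin 3)) 2).of_isClosed_subset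
      (isClosed_tsupport _) (hsub.trans ?_)
    intro z hz
    have h2 : ‖z‖ ^ 2 ≤ 2 := hz.2
    rw [mem_closedBall_zero_iff]
    nlinarith [norm_nonneg z]
  · intro z hz h
    have h2 : 1 ≤ ‖z‖ ^ 2 := (hsub hz).1
    rw [Set.mem_singleton_iff] at h
    rw [h] at h2
    norm_num at h2

lemma radial_symm (i j : Fin 3) (q : ℝ → ℝ) :
    ∫ z : EuclideanSpace ℝ (Fin 3), (z i) ^ 2 * q ‖z‖ = ∫ z : EuclideanSpace ℝ (Fin 3),
      (z j) ^ 2 * q ‖z‖ := by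
  let L : EuclideanSpace ℝ (Fin 3) ≃ₗᵢ[ℝ] EuclideanSpace ℝ (Fin 3) :=
    LinearIsometryEquiv.piLpCongrLeft 2 ℝ ℝ (Equiv.swap i j)
  have h := (L.measurePreserving).integral_comp (L.toHomeomorph.measurableEmbedding)
    (fun z : EuclideanSpace ℝ (Fin 3) => (z j) ^ 2 * q ‖z‖)
  rw [← h]
  refine integral_congr_ae (Eventually.of_forall fun z => ?_)
  simp only [LinearIsometryEquiv.norm_map]
  have : (L z) j = z i := by
    simp [L, LinearIsometryEquiv.piLpCongrLeft_apply]
  rw [this]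

lemma radial_pos (x : EuclideanSpace ℝ (Fin 3)) (j : Fin 3) :
    ∫ z, dip x j z * LapE (cutψ x j) z ≠ 0 := by
  set q : ℝ → ℝ := fun r => (-1 / (4 * Real.pi * r ^ 3)) * cutk (r ^ 2) with hq
  have h1 : ∫ z, dip x j z * LapE (cutψ x j) z = ∫ z : EuclideanSpace ℝ (Fin 3),
      (z j) ^ 2 * q ‖z‖ := by
    rw [← integral_sub_right_eq_self (fun z : EuclideanSpace ℝ (Fin 3) => (z j) ^ 2 * q ‖z‖) x]
    refine integral_congr_ae (Eventually.of_forall fun z => ?_)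
    simp only [LapE_cutψ, dip, hq]
    ring
  have h3 : (3 : ℝ) * ∫ z : EuclideanSpace ℝ (Fin 3), (z j) ^ 2 * q ‖z‖
      = ∫ z : EuclideanSpace ℝ (Fin 3), (fun r => r ^ 2 * q r) ‖z‖ := by
    have : ∀ z : EuclideanSpace ℝ (Fin 3), (fun r => r ^ 2 * q r) ‖z‖
        = ∑ i, (z i) ^ 2 * q ‖z‖ := by
      intro z
      simp only
      rw [EuclideanSpace.norm_sq_eq, Finset.sum_mul]
      simp
    simp only [this]
    rw [integral_finsetSum]
    · rw [Finset.sum_congr rfl fun i _ => radial_symm i j q]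
      simp
    · intro i _
      refine (radial_integrable i).congr (Eventually.of_forall fun z => ?_)
      simp only [hq]
      ring
  have h4 := integral_fun_norm_addHaar (volume : Measure (EuclideanSpace ℝ (Fin 3)))
    (fun r => r ^ 2 * q r)
  have h5 : ∫ r in Set.Ioi (0 : ℝ), r ^ 2 * (r ^ 2 * q r) = 3 / (4 * Real.pi) := by
    have : ∫ r in Set.Ioi (0 : ℝ), r ^ 2 * (r ^ 2 * q r)
        = ∫ r in Set.Ioi (0 : ℝ), (-1 / (4 * Real.pi)) * (r * cutk (r ^ 2)) := by
      refine setIntegral_congr_fun measurableSet_Ioi fun r hr => ?_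
      have hr' : r ≠ 0 := ne_of_gt hr
      simp only [hq]
      field_simp
    rw [this, integral_const_mul, radial_1d]
    ring
  have hvol : 0 < volume.real (Metric.ball (0 : EuclideanSpace ℝ (Fin 3)) 1) :=
    ENNReal.toReal_pos (Metric.measure_ball_pos _ _ one_pos).ne' measure_ball_lt_top.ne
  rw [h1]
  intro h0
  rw [h0, mul_zero, h4] at h3
  simp only [finrank_euclideanSpace, Fintype.card_fin, smul_eq_mul, Nat.add_one_sub_one] at h3
  rw [h5] at h3
  have := Real.pi_pos
  have : 0 < (3 : ℕ) • (volume.real (Metric.ball (0 : EuclideanSpace ℝ (Fin 3)) 1)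
     * (3 / (4 * Real.pi))) := by positivity
  linarith

lemma dip_test_ne_zero (x : EuclideanSpace ℝ (Fin 3)) (j : Fin 3)
    {ψ : EuclideanSpace ℝ (Fin 3) → ℝ} (hψ : ContDiff ℝ 2 ψ) (hc : HasCompactSupport ψ)
    (hx : x ∉ tsupport (LapE ψ)) (hψx : ψ =ᶠ[𝓝 x] fun y => (y - x) j) :
    ∫ z, dip x j z * LapE ψ z ≠ 0 := by
  have hcc : HasCompactSupport (cutψ x j) := by
    apply HasCompactSupport.intro (isCompact_closedBall x 2)
    intro z hz
    rw [Metric.mem_closedBall, dist_eq_norm, not_le] at hz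
    rw [cutψ, cutf_gt, mul_zero]
    nlinarith
  have hcx : cutψ x j =ᶠ[𝓝 x] fun y => (y - x) j := by
    filter_upwards [Metric.ball_mem_nhds x one_pos] with y hy
    rw [Metric.mem_ball, dist_eq_norm] at hy
    rw [cutψ, cutf_lt, mul_one]
    nlinarith [norm_nonneg (y - x)]
  have hx' : x ∉ tsupport (LapE (cutψ x j)) := by
    rw [notMem_tsupport_iff_eventuallyEq]
    filter_upwards [Metric.ball_mem_nhds x one_pos] with y hy
    rw [Metric.mem_ball, dist_eq_norm] at hy
    rw [LapE_cutψ, cutk_lt, mul_zero]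
    · rfl
    · nlinarith [norm_nonneg (y - x)]
  have hsub : ∀ {s : Set (EuclideanSpace ℝ (Fin 3))}, x ∉ s → s ⊆ {x}ᶜ := by
    intro s hs y hy h
    exact hs (h ▸ hy)
  have h0 : ∫ z, dip x j z * LapE (fun y => ψ y - cutψ x j y) z = 0 := by
    refine integral_mul_LapE (V := {x}ᶜ) isOpen_compl_singleton (dip_contDiffOn x j)
      (dip_harmonic x j) (hψ.sub (cutψ_contDiff x j)) (hc.sub hcc) (hsub ?_)
    rw [notMem_tsupport_iff_eventuallyEq]
    filter_upwards [hψx, hcx] with y h1 h2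
    simp [h1, h2]
  have i1 : Integrable (fun z => dip x j z * LapE ψ z) :=
    mul_integrable_of_supp (V := {x}ᶜ) isOpen_compl_singleton (dip_contDiffOn x j).continuousOn
      (LapE_continuous hψ) (hc.of_isClosed_subset (isClosed_tsupport _) (tsupport_LapE ψ))
      (hsub hx)
  have i2 : Integrable (fun z => dip x j z * LapE (cutψ x j) z) :=
    mul_integrable_of_supp (V := {x}ᶜ) isOpen_compl_singleton (dip_contDiffOn x j).continuousOn
      (LapE_continuous (cutψ_contDiff x j))
      (hcc.of_isClosed_subset (isClosed_tsupport _) (tsupport_LapE _)) (hsub hx')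
  simp only [LapE_sub hψ (cutψ_contDiff x j), mul_sub] at h0
  rw [integral_sub i1 i2, sub_eq_zero] at h0
  rw [h0]
  exact radial_pos x j

lemma needle_cover {m : ℕ} (t : Fin (m + 1) → ℝ) (h0 : t 0 = 0) (h1 : t (Fin.last m) = 1)
    {u : ℝ} (hu : u ∈ Set.Icc (0 : ℝ) 1) :
    ∃ i : Fin m, u ∈ Set.Icc (t i.castSucc) (t i.succ) := by
  by_contra! hcon
  have key : ∀ k : Fin (m + 1), t k ≤ u := by
    intro k
    induction k using Fin.induction with
    | zero => rw [h0]; exact hu.1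
    | succ i ih =>
      by_contra h
      exact hcon i ⟨ih, (not_le.mp h).le⟩
  have h1' := key (Fin.last m)
  obtain ⟨m', rfl⟩ : ∃ m', m = m' + 1 := by
    cases m with
    | zero => simp [h0] at h1
    | succ m' => exact ⟨m', rfl⟩
  apply hcon (Fin.last m')
  refine ⟨key _, ?_⟩
  rw [Fin.succ_last, h1]
  exact hu.2

lemma needle_continuousOn {σ : ℝ → EuclideanSpace ℝ (Fin 3)} (h : PiecewiseLinear σ) :
    ContinuousOn σ (Set.Icc 0 1) := by
  obtain ⟨m, t, ht, h0, h1, hlin⟩ := h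
  have hc : ContinuousOn σ (⋃ i : Fin m, Set.Icc (t i.castSucc) (t i.succ)) := by
    refine (locallyFinite_of_finite _).continuousOn_iUnion (fun i => isClosed_Icc) fun i => ?_
    refine ContinuousOn.congr ?_ (hlin i)
    fun_prop
  refine hc.mono fun u hu => ?_
  obtain ⟨i, hi⟩ := needle_cover t h0 h1 hu
  exact Set.mem_iUnion.mpr ⟨i, hi⟩

lemma line_null (a b : EuclideanSpace ℝ (Fin 3)) :
    volume (affineSpan ℝ {a, b} : Set (EuclideanSpace ℝ (Fin 3))) = 0 := by
  apply Measure.addHaar_affineSubspace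
  intro h
  have h1 := collinear_iff_finrank_le_one.mp (collinear_pair ℝ a b)
  rw [← direction_affineSpan, h, AffineSubspace.direction_top, finrank_top] at h1
  simp at h1

lemma needle_null {σ : ℝ → EuclideanSpace ℝ (Fin 3)} (h : PiecewiseLinear σ) :
    volume (σ '' Set.Icc 0 1) = 0 := by
  obtain ⟨m, t, ht, h0, h1, hlin⟩ := h
  have hsub : σ '' Set.Icc 0 1 ⊆ ⋃ i : Fin m,
      (affineSpan ℝ {σ (t i.castSucc), σ (t i.succ)} : Set (EuclideanSpace ℝ (Fin 3))) := by
    rintro _ ⟨u, hu, rfl⟩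
    obtain ⟨i, hi⟩ := needle_cover t h0 h1 hu
    refine Set.mem_iUnion.mpr ⟨i, ?_⟩
    rw [hlin i u hi]
    have := AffineMap.lineMap_mem_affineSpan_pair
      ((u - t i.castSucc) / (t i.succ - t i.castSucc)) (σ (t i.castSucc)) (σ (t i.succ))
    rw [AffineMap.lineMap_apply] at this
    simpa [add_comm] using this
  exact measure_mono_null hsub (measure_iUnion_null fun i => line_null _ _)

lemma exists_cutoff {C W : Set (EuclideanSpace ℝ (Fin 3))} (hC : IsCompact C) (hW : IsOpen W)
    (hCW : C ⊆ W) : ∃ χ : EuclideanSpace ℝ (Fin 3) → ℝ, ContDiff ℝ 2 χ ∧ HasCompactSupport χ ∧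
      tsupport χ ⊆ W ∧ ∀ᶠ y in 𝓝ˢ C, χ y = 1 := by
  obtain ⟨K, hK, hCK, hKW⟩ := exists_compact_between hC hW hCW
  obtain ⟨χ, h1, h0, -⟩ := exists_contMDiffMap_one_nhds_of_subset_interior (n := 2)
    (modelWithCornersSelf ℝ (EuclideanSpace ℝ (Fin 3))) hC.isClosed hCK
  have hs : tsupport χ ⊆ K := by
    refine closure_minimal ?_ hK.isClosed
    intro y hy
    by_contra h
    exact hy (h0 y h)
  exact ⟨χ, χ.contMDiff.contDiff, hK.of_isClosed_subset (isClosed_tsupport _) hs,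
    hs.trans hKW, h1⟩

lemma LapE_coord (x : EuclideanSpace ℝ (Fin 3)) (j : Fin 3) (z : EuclideanSpace ℝ (Fin 3)) :
    LapE (fun y => (y - x) j) z = 0 := by
  have := LapE_radial x j (f := fun _ => 1) (f' := fun _ => 0) (f'' := 0) z
    (Eventually.of_forall fun t => hasDerivAt_const t 1) (hasDerivAt_const _ 0)
  simpa using this

lemma young_bound {a b C η : ℝ} (hη : 0 < η) (hb : |b| ≤ C) :
    |a| * |b| ≤ η * a ^ 2 + C ^ 2 / (4 * η) := by
  have h1 : |a| * |b| ≤ |a| * C := mul_le_mul_of_nonneg_left hb (abs_nonneg a)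
  have h2 : η * a ^ 2 + C ^ 2 / (4 * η) - |a| * C = (2 * η * |a| - C) ^ 2 / (4 * η) := by
    rw [← sq_abs a]
    field_simp
    ring
  have h3 : 0 ≤ (2 * η * |a| - C) ^ 2 / (4 * η) := by positivity
  linarith

lemma blowup {Ω V N B : Set (EuclideanSpace ℝ (Fin 3))} (hV : IsOpen V) (hVΩ : V ⊆ Ω)
    (hN : volume N = 0) (hB : IsOpen B) {v : ℕ → EuclideanSpace ℝ (Fin 3) → ℝ}
    {Φ g : EuclideanSpace ℝ (Fin 3) → ℝ} (hv : ∀ n, ContinuousOn (v n) V)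
    (hΦ : ContinuousOn Φ V) (hg : Continuous g) (hgc : HasCompactSupport g)
    (hgV : tsupport g ⊆ V) (hgN : tsupport g ∩ N ⊆ B) (hzero : ∀ n, ∫ z, v n z * g z = 0)
    (hne : ∫ z, Φ z * g z ≠ 0)
    (hconv : ∀ K : Set (EuclideanSpace ℝ (Fin 3)), K ⊆ V \ N → IsCompact K →
      Tendsto (fun n => ∫ z in K, (v n z - Φ z) ^ 2) atTop (𝓝 0)) :
    Tendsto (fun n => ∫⁻ z in B ∩ Ω, ENNReal.ofReal ((v n z) ^ 2)) atTop (𝓝 ⊤) := by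
  rw [ENNReal.tendsto_nhds_top_iff_nnreal]
  intro M
  set S := tsupport g with hS
  have hSc : IsCompact S := hgc
  obtain ⟨C, hC⟩ : ∃ C : ℝ, ∀ z, |g z| ≤ C := hg.bounded_above_of_compact_support hgc
  obtain ⟨P, hP⟩ : ∃ P : ℝ, ∀ z ∈ S, |Φ z| ≤ P :=
    hSc.exists_bound_of_continuousOn (hΦ.mono hgV)
  have hC0 : 0 ≤ C := (abs_nonneg _).trans (hC 0)
  set c := |∫ z, Φ z * g z| with hc
  have hcpos : 0 < c := abs_pos.mpr hne
  set η : ℝ := c / (4 * (M + 1)) with hη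
  have hM0 : (0 : ℝ) ≤ M := M.2
  have hηpos : 0 < η := by positivity
  have hηM : η * M ≤ c / 4 := by
    rw [hη, div_mul_eq_mul_div, div_le_div_iff₀ (by positivity) (by norm_num)]
    nlinarith
  set D : ℝ := C ^ 2 / (4 * η) + P * C with hD
  set D1 : ℝ := |D| + 1 with hD1
  have hD1pos : 0 < D1 := by positivity
  obtain ⟨U, hNU, hUo, hUv⟩ := N.exists_isOpen_lt_of_lt (μ := volume)
    (ENNReal.ofReal (c / (4 * D1))) (by rw [hN]; exact ENNReal.ofReal_pos.mpr (by positivity))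
  set A := S ∩ (U ∩ B) with hA
  set E := S \ (U ∩ B) with hE
  have hAm : MeasurableSet A := hSc.measurableSet.inter (hUo.inter hB).measurableSet
  have hEc : IsCompact E := hSc.diff (hUo.inter hB)
  have hEN : E ⊆ V \ N := by
    rintro z ⟨hz1, hz2⟩
    exact ⟨hgV hz1, fun hz => hz2 ⟨hNU hz, hgN ⟨hz1, hz⟩⟩⟩
  have hAv : volume.real A ≤ c / (4 * D1) := by
    have h1 : volume A ≤ ENNReal.ofReal (c / (4 * D1)) :=
      (measure_mono (fun z hz => hz.2.1)).trans hUv.le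
    exact ENNReal.toReal_le_of_le_ofReal (by positivity) h1
  have hSfin : volume S ≠ ⊤ := hSc.measure_lt_top.ne
  have hAfin : volume A ≠ ⊤ := ne_top_of_le_ne_top hSfin (measure_mono Set.inter_subset_left)
  have hEfin : volume E ≠ ⊤ := hEc.measure_lt_top.ne
  have hEv : volume.real E ≤ volume.real S := measureReal_mono Set.sdiff_subset hSfin
  set η1 : ℝ := C ^ 2 * volume.real S / c + 1 with hη1
  have hη1pos : 0 < η1 := by positivity
  have hη1S : C ^ 2 / (4 * η1) * volume.real S ≤ c / 4 := by
    rw [div_mul_eq_mul_div, div_le_div_iff₀ (by positivity) (by norm_num)]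
    have : c * η1 = C ^ 2 * volume.real S + c := by
      rw [hη1]; field_simp
    nlinarith
  have hev := (hconv E hEN hEc).eventually (gt_mem_nhds (show (0 : ℝ) < c / (4 * η1) by positivity))
  filter_upwards [hev] with n hn
  by_contra hcon
  rw [not_lt] at hcon
  have hvS : ContinuousOn (v n) S := (hv n).mono hgV
  have hΦS : ContinuousOn Φ S := hΦ.mono hgV
  have hint : Integrable (fun z => (v n z - Φ z) * g z) :=
    mul_integrable_of_supp hV ((hv n).sub hΦ) hg hgc hgV
  have hc1 : c = |∫ z, (v n z - Φ z) * g z| := by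
    simp only [sub_mul]
    rw [integral_sub (mul_integrable_of_supp hV (hv n) hg hgc hgV)
      (mul_integrable_of_supp hV hΦ hg hgc hgV), hzero n, zero_sub, abs_neg]
  have hc2 : c ≤ ∫ z, |v n z - Φ z| * |g z| := by
    rw [hc1]
    simp only [← abs_mul]
    exact abs_integral_le_integral_abs
  have hint' : Integrable (fun z => |v n z - Φ z| * |g z|) := by
    simp only [← abs_mul]
    exact hint.abs
  have hc3 : ∫ z, |v n z - Φ z| * |g z| = (∫ z in A, |v n z - Φ z| * |g z|)
      + ∫ z in E, |v n z - Φ z| * |g z| := by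
    have h1 : ∫ z in S, |v n z - Φ z| * |g z| = ∫ z, |v n z - Φ z| * |g z| := by
      refine setIntegral_eq_integral_of_forall_compl_eq_zero fun z hz => ?_
      rw [image_eq_zero_of_notMem_tsupport hz]; simp
    rw [← h1, ← integral_inter_add_sdiff (s := S) (t := U ∩ B) (hUo.inter hB).measurableSet
      hint'.integrableOn]
  have hEint : IntegrableOn (fun z => (v n z - Φ z) ^ 2) E :=
    (((hvS.sub hΦS).pow 2).mono Set.sdiff_subset).integrableOn_compact hEc
  have hEle : ∫ z in E, |v n z - Φ z| * |g z| ≤ η1 * (∫ z in E, (v n z - Φ z) ^ 2)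
      + C ^ 2 / (4 * η1) * volume.real E := by
    have hconst : IntegrableOn (fun _ : EuclideanSpace ℝ (Fin 3) => C ^ 2 / (4 * η1)) E :=
      integrableOn_const hEfin
    calc _ ≤ ∫ z in E, (η1 * (v n z - Φ z) ^ 2 + C ^ 2 / (4 * η1)) :=
by
          refine setIntegral_mono_on hint'.integrableOn ((hEint.const_mul η1).add hconst)
            hEc.measurableSet fun z _ => ?_
          exact young_bound hη1pos (hC z)
      _ = _ := by
        rw [integral_add (hEint.const_mul η1) hconst, integral_const_mul, setIntegral_const,
          smul_eq_mul, mul_comm (volume.real E)]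
  have hAint : IntegrableOn (fun z => (v n z) ^ 2) A :=
    ((hvS.pow 2).integrableOn_compact hSc).mono_set Set.inter_subset_left
  have hAle : ∫ z in A, |v n z - Φ z| * |g z| ≤ η * (∫ z in A, (v n z) ^ 2)
      + D * volume.real A := by
    have hconst : IntegrableOn (fun _ : EuclideanSpace ℝ (Fin 3) => D) A :=
      integrableOn_const hAfin
    calc _ ≤ ∫ z in A, (η * (v n z) ^ 2 + D) := by
          refine setIntegral_mono_on hint'.integrableOn ((hAint.const_mul η).add hconst)
            hAm fun z hz => ?_
          have h1 := young_bound (a := v n z) hηpos (hC z)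
          have h2 : |Φ z| * |g z| ≤ P * C :=
            mul_le_mul (hP z hz.1) (hC z) (abs_nonneg _) ((abs_nonneg _).trans (hP z hz.1))
          have h3 : |v n z - Φ z| ≤ |v n z| + |Φ z| := abs_sub _ _
          have h4 := mul_le_mul_of_nonneg_right h3 (abs_nonneg (g z))
          rw [hD]
          linarith
      _ = _ := by
        rw [integral_add (hAint.const_mul η) hconst, integral_const_mul, setIntegral_const,
          smul_eq_mul, mul_comm (volume.real A)]
  have hAM : ∫ z in A, (v n z) ^ 2 ≤ M := by
    rw [integral_eq_lintegral_of_nonneg_ae (Eventually.of_forall fun z => sq_nonneg _)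
      hAint.aestronglyMeasurable]
    refine ENNReal.toReal_le_of_le_ofReal hM0 ?_
    rw [ENNReal.ofReal_coe_nnreal]
    refine le_trans (lintegral_mono_set ?_) hcon
    exact fun z hz => ⟨hz.2.2, hVΩ (hgV hz.1)⟩
  have e1 : η * (∫ z in A, (v n z) ^ 2) ≤ c / 4 :=
    (mul_le_mul_of_nonneg_left hAM hηpos.le).trans hηM
  have e2 : D * volume.real A ≤ c / 4 := by
    calc D * volume.real A ≤ D1 * volume.real A :=
          mul_le_mul_of_nonneg_right ((le_abs_self D).trans (by rw [hD1]; linarith))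
            measureReal_nonneg
      _ ≤ D1 * (c / (4 * D1)) := mul_le_mul_of_nonneg_left hAv hD1pos.le
      _ = c / 4 := by field_simp
  have e3 : η1 * (∫ z in E, (v n z - Φ z) ^ 2) < c / 4 := by
    calc _ < η1 * (c / (4 * η1)) := mul_lt_mul_of_pos_left hn hη1pos
      _ = c / 4 := by field_simp
  have e4 : C ^ 2 / (4 * η1) * volume.real E ≤ c / 4 :=
    (mul_le_mul_of_nonneg_left hEv (by positivity)).trans hη1S
  linarith

/-- **Proposition 3.1(b).** Let `Ω ⊆ ℝ³` be a bounded open set, `x ∈ Ω`, `σ` a needle with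
tip at `x`, `Φ(z) = ∂G/∂z_j(z − x)`, and `(v_n)` harmonic functions on `Ω` with
`∫_K (v_n − Φ)² → 0` for every compact `K ⊆ Ω ∖ σ([0,1])`. Then for every `z₀ ∈ σ((0,1])`
and every open ball `B` centered at `z₀`, `∫_{B ∩ Ω} v_n² dz → +∞`. -/
theorem prop31b (Ω : Set (EuclideanSpace ℝ (Fin 3))) (hΩo : IsOpen Ω)
    (hΩb : Bornology.IsBounded Ω)
    (x : EuclideanSpace ℝ (Fin 3)) (hx : x ∈ Ω)
    (σ : ℝ → EuclideanSpace ℝ (Fin 3)) (hσ : IsNeedle Ω x σ)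
    (j : Fin 3) (Φ : EuclideanSpace ℝ (Fin 3) → ℝ)
    (hΦ : ∀ z, Φ z = -((z - x) j) / (4 * Real.pi * ‖z - x‖ ^ 3))
    (v : ℕ → EuclideanSpace ℝ (Fin 3) → ℝ) (hharm : ∀ n, HarmonicOnSet (v n) Ω)
    (hconv : ∀ K : Set (EuclideanSpace ℝ (Fin 3)),
      K ⊆ Ω \ (σ '' Set.Icc 0 1) → IsCompact K →
      Tendsto (fun n => ∫ z in K, (v n z - Φ z) ^ 2) atTop (𝓝 0))
    (z₀ : EuclideanSpace ℝ (Fin 3)) (hz₀ : z₀ ∈ σ '' Set.Ioc 0 1)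
    (r : ℝ) (hr : 0 < r) :
    Tendsto (fun n => ∫⁻ z in Metric.ball z₀ r ∩ Ω, ENNReal.ofReal ((v n z) ^ 2))
      atTop (𝓝 ⊤) := by
  obtain ⟨hpl, hinj, -, -, hσ1, hσΩ⟩ := hσ
  obtain ⟨s, hs, rfl⟩ := hz₀
  have hσc := needle_continuousOn hpl
  have hΦd : Φ = dip x j := funext fun z => hΦ z
  subst hΦd
  have hC : IsCompact (σ '' Set.Icc s 1) :=
    isCompact_Icc.image_of_continuousOn (hσc.mono (Set.Icc_subset_Icc hs.1.le le_rfl))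
  have hT : IsCompact (σ '' Set.Icc 0 s) :=
    isCompact_Icc.image_of_continuousOn (hσc.mono (Set.Icc_subset_Icc le_rfl hs.2))
  have hD : IsClosed (σ '' Set.Icc 0 s \ Metric.ball (σ s) r) :=
    (hT.diff Metric.isOpen_ball).isClosed
  have hCW : σ '' Set.Icc s 1 ⊆ Ω \ (σ '' Set.Icc 0 s \ Metric.ball (σ s) r) := by
    rintro _ ⟨b, hb, rfl⟩
    constructor
    · rcases eq_or_lt_of_le hb.2 with h | h
      · rw [h, hσ1]; exact hx
      · exact hσΩ b ⟨hs.1.trans_le hb.1, h⟩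
    · rintro ⟨⟨a, ha, hab⟩, hnb⟩
      have hab' : a = b := hinj ⟨ha.1, ha.2.trans hs.2⟩ ⟨hs.1.le.trans hb.1, hb.2⟩ hab
      have : b = s := le_antisymm (hab' ▸ ha.2) hb.1
      apply hnb
      rw [this]
      exact Metric.mem_ball_self hr
  obtain ⟨χ, hχ, hχc, hχs, hχ1⟩ := exists_cutoff hC (hΩo.sdiff hD) hCW
  have hxC : x ∈ σ '' Set.Icc s 1 := ⟨1, ⟨hs.2, le_rfl⟩, hσ1⟩
  set ψ : EuclideanSpace ℝ (Fin 3) → ℝ := fun z => χ z * (z - x) j with hψdef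
  have hψ : ContDiff ℝ 2 ψ := hχ.mul (coord_contDiff x j (n := 2))
  have hψc : HasCompactSupport ψ := hχc.mul_right
  have hψs : tsupport ψ ⊆ tsupport χ := tsupport_mul_subset_left
  have hψC : ∀ y ∈ σ '' Set.Icc s 1, ψ =ᶠ[𝓝 y] fun z => (z - x) j := by
    intro y hy
    filter_upwards [(eventually_nhdsSet_iff_forall.mp hχ1) y hy] with z hz
    simp [hψdef, hz]
  have hgC : ∀ y ∈ σ '' Set.Icc s 1, y ∉ tsupport (LapE ψ) := by
    intro y hy
    rw [notMem_tsupport_iff_eventuallyEq]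
    filter_upwards [(hψC y hy).eventuallyEq_nhds] with z hz
    rw [LapE_congr hz, LapE_coord]
    rfl
  have hgs : tsupport (LapE ψ) ⊆ Ω \ (σ '' Set.Icc 0 s \ Metric.ball (σ s) r) :=
    (tsupport_LapE ψ).trans (hψs.trans hχs)
  refine blowup (V := Ω ∩ {x}ᶜ) (N := σ '' Set.Icc 0 1) (Φ := dip x j) (g := LapE ψ)
    (hΩo.inter isOpen_compl_singleton) Set.inter_subset_left (needle_null hpl)
    Metric.isOpen_ball (fun n => (hharm n).1.continuousOn.mono Set.inter_subset_left)
    ((dip_contDiffOn x j).continuousOn.mono Set.inter_subset_right) (LapE_continuous hψ)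
    (hψc.of_isClosed_subset (isClosed_tsupport _) (tsupport_LapE ψ)) ?_ ?_ ?_ ?_ ?_
  · intro z hz
    refine ⟨(hgs hz).1, fun h => hgC x hxC ?_⟩
    rw [Set.mem_singleton_iff] at h
    exact h ▸ hz
  · rintro _ ⟨hz, ⟨a, ha, rfl⟩⟩
    by_contra hnb
    rcases le_total a s with h | h
    · exact (hgs hz).2 ⟨⟨a, ⟨ha.1, h⟩, rfl⟩, hnb⟩
    · exact hgC _ ⟨a, ⟨h, ha.2⟩, rfl⟩ hz
  · intro n
    exact integral_mul_LapE hΩo (hharm n).1 (hharm n).2 hψ hψc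
      ((hψs.trans hχs).trans Set.sdiff_subset)
  · exact dip_test_ne_zero x j hψ hψc (hgC x hxC) (hψC x hxC)
  · intro K hK hKc
    exact hconv K (fun z hz => ⟨(hK hz).1.1, (hK hz).2⟩) hKc
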